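/- For every γ ∈ 𝓜 there exist r > 0 and C > 0 such that the H^s-ball B_r(γ) = { η ∈ H^s(𝕋,ℝⁿ) : ‖η − γ‖_{H^s} < r } is contained in 𝓜 and d_G(γ₁, γ₀) ≤ C · ‖γ₁ − γ₀‖_{H^s} for all γ₀, γ₁ ∈ B_r(γ). Consequently, the identity map (𝓜, d_G) → (𝓜, ‖·‖_{H^s}-distance) is locally bi-Lipschitz. -/

import Mathlib

open MeasureTheory Real Filter Set
open scoped ENNReal Topology RealInnerProductSpace

noncomputable section

/-- Euclidean space `ℝⁿ`. -/
abbrev En (n : ℕ) : Type := EuclideanSpace ℝ (Fin n)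

/-- A fundamental domain for the circle `𝕋 = ℝ/ℤ`. -/
def I01 : Set ℝ := Set.Ico (0 : ℝ) 1

/-- The intrinsic distance on `𝕋 = ℝ/ℤ`, expressed for real representatives. -/
def dT (x y : ℝ) : ℝ := ⨅ k : ℤ, |x - y - (k : ℝ)|

/-- Supremum norm of a (periodic) function on the circle. -/
def supNorm {E : Type*} [NormedAddCommGroup E] (f : ℝ → E) : ℝ := ⨆ x : ℝ, ‖f x‖

/-- The squared Gagliardo seminorm `[v]_{H^σ}²` of a function on the circle, valued in `[0,∞]`. -/
def gagliardoSqE {E : Type*} [NormedAddCommGroup E] (σ : ℝ) (v : ℝ → E) : ℝ≥0∞ :=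
  ∫⁻ x in I01, ∫⁻ y in I01, ENNReal.ofReal (‖v y - v x‖ ^ 2 / dT x y ^ (2 * σ + 1))

/-- Membership in the Sobolev–Slobodeckij space `H^s(𝕋, ℝⁿ)`; for `s ∈ (3/2,2)` such
functions have a `C¹` representative, which we take as the defining data. -/
def InHs {n : ℕ} (s : ℝ) (u : ℝ → En n) : Prop :=
  Function.Periodic u 1 ∧ ContDiff ℝ 1 u ∧ gagliardoSqE (s - 1) (deriv u) < ⊤

/-- The squared `H^s` norm `‖u‖²_{L²} + ‖u'‖²_{L²} + [u']²_{H^{s-1}}`. -/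
def HsNormSq {n : ℕ} (s : ℝ) (u : ℝ → En n) : ℝ :=
  (∫ x in I01, ‖u x‖ ^ 2) + (∫ x in I01, ‖deriv u x‖ ^ 2) +
    (gagliardoSqE (s - 1) (deriv u)).toReal

/-- The `H^s` norm. -/
def HsNorm {n : ℕ} (s : ℝ) (u : ℝ → En n) : ℝ := Real.sqrt (HsNormSq s u)

/-- The `H^s` inner product. -/
def HsInner {n : ℕ} (s : ℝ) (u v : ℝ → En n) : ℝ :=
  (∫ x in I01, ⟪u x, v x⟫) + (∫ x in I01, ⟪deriv u x, deriv v x⟫) +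
    ∫ x in I01, ∫ y in I01,
      ⟪deriv u y - deriv u x, deriv v y - deriv v x⟫ / dT x y ^ (2 * (s - 1) + 1)

/-- The manifold `𝓜` of embedded closed curves of class `H^s`: injective (on the circle)
immersions. -/
def InM {n : ℕ} (s : ℝ) (γ : ℝ → En n) : Prop :=
  InHs s γ ∧ Set.InjOn γ I01 ∧ ∀ x, deriv γ x ≠ 0

/-- The length `L(γ)`. -/
def arcLen {n : ℕ} (γ : ℝ → En n) : ℝ := ∫ x in I01, ‖deriv γ x‖

/-- The arc-length distance `d_γ(x,y)`: the length of the shorter of the two arcs of `γ`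
between `x` and `y`. -/
def arcDist {n : ℕ} (γ : ℝ → En n) (x y : ℝ) : ℝ :=
  ⨅ k : ℤ, |∫ t in x..(y + (k : ℝ)), ‖deriv γ t‖|

/-- Derivative with respect to arc length, `D_γ u = u' / |γ'|`. -/
def Dg {n : ℕ} (γ u : ℝ → En n) (x : ℝ) : En n := ‖deriv γ x‖⁻¹ • deriv u x

/-- `𝒟_γ u (x)`, the pointwise linear map `w ↦ |γ'(x)|⁻² ⟪γ'(x), w⟫ u'(x)`. -/
def DDg {n : ℕ} (γ u : ℝ → En n) (x : ℝ) (w : En n) : En n :=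
  ((‖deriv γ x‖ ^ 2)⁻¹ * ⟪deriv γ x, w⟫) • deriv u x

/-- The operator `R^s_γ`. -/
def Rop {n : ℕ} (s : ℝ) (γ u : ℝ → En n) (x y : ℝ) : En n :=
  (‖γ y - γ x‖ ^ s)⁻¹ • (u y - u x - DDg γ u x (γ y - γ x))

/-- Density of the measure `μ_γ` with respect to `λ ⊗ λ` on `𝕋 × 𝕋`. -/
def muW {n : ℕ} (γ : ℝ → En n) (x y : ℝ) : ℝ :=
  ‖deriv γ x‖ * ‖deriv γ y‖ / ‖γ y - γ x‖

/-- Density of the measure `ν_γ` with respect to `λ ⊗ λ` on `𝕋 × 𝕋`. -/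
def nuW {n : ℕ} (γ : ℝ → En n) (x y : ℝ) : ℝ :=
  ‖deriv γ x‖ * ‖deriv γ y‖ / arcDist γ x y

/-- The tangent-point energy, valued in `[0,∞]`. -/
def EtpE {n : ℕ} (s : ℝ) (γ : ℝ → En n) : ℝ≥0∞ :=
  ∫⁻ x in I01, ∫⁻ y in I01, ENNReal.ofReal (‖Rop s γ γ x y‖ ^ 2 * muW γ x y)

/-- The tangent-point energy, real-valued (finite on `𝓜`). -/
def Etp {n : ℕ} (s : ℝ) (γ : ℝ → En n) : ℝ := (EtpE s γ).toReal

/-- `‖R^s_γ u‖²_{L²(ν_γ)}`, valued in `[0,∞]`. -/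
def RnuSqE {n : ℕ} (s : ℝ) (γ u : ℝ → En n) : ℝ≥0∞ :=
  ∫⁻ x in I01, ∫⁻ y in I01, ENNReal.ofReal (‖Rop s γ u x y‖ ^ 2 * nuW γ x y)

/-- `‖R^s_γ u‖²_{L²(ν_γ)}`, real-valued. -/
def RnuSq {n : ℕ} (s : ℝ) (γ u : ℝ → En n) : ℝ := (RnuSqE s γ u).toReal

/-- The squared `γ`-dependent seminorm `[u]²_{H^s(γ)}`, valued in `[0,∞]`. -/
def gagGammaSqE {n : ℕ} (s : ℝ) (γ u : ℝ → En n) : ℝ≥0∞ :=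
  ∫⁻ x in I01, ∫⁻ y in I01,
    ENNReal.ofReal (‖Dg γ u y - Dg γ u x‖ ^ 2 / arcDist γ x y ^ (2 * (s - 1)) * nuW γ x y)

/-- The squared `γ`-dependent seminorm `[u]²_{H^s(γ)}`, real-valued. -/
def gagGammaSq {n : ℕ} (s : ℝ) (γ u : ℝ → En n) : ℝ := (gagGammaSqE s γ u).toReal

/-- The inner product `⟨u,v⟩_{L²(γ)}`. -/
def innerL2g {n : ℕ} (γ u v : ℝ → En n) : ℝ := ∫ x in I01, ⟪u x, v x⟫ * ‖deriv γ x‖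

/-- The inner product `⟨u,v⟩_{H¹(γ)}`. -/
def innerH1g {n : ℕ} (γ u v : ℝ → En n) : ℝ :=
  ∫ x in I01, ⟪Dg γ u x, Dg γ v x⟫ * ‖deriv γ x‖

/-- The squared `γ`-dependent norm `‖u‖²_{H^s(γ)}`. -/
def HsGammaNormSq {n : ℕ} (s : ℝ) (γ u : ℝ → En n) : ℝ :=
  innerL2g γ u u + innerH1g γ u u + gagGammaSq s γ u

/-- The `γ`-dependent norm `‖u‖_{H^s(γ)}`. -/
def HsGammaNorm {n : ℕ} (s : ℝ) (γ u : ℝ → En n) : ℝ := Real.sqrt (HsGammaNormSq s γ u)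

/-- The bilinear form `B¹_γ`. -/
def B1 {n : ℕ} (s : ℝ) (γ u v : ℝ → En n) : ℝ :=
  ∫ x in I01, ∫ y in I01, ⟪Rop s γ u x y, Rop s γ v x y⟫ * muW γ x y

/-- The bilinear form `B²_γ`. -/
def B2 {n : ℕ} (s : ℝ) (γ u v : ℝ → En n) : ℝ :=
  ∫ x in I01, ∫ y in I01,
    ‖Rop s γ γ x y‖ ^ 2 * (⟪u y - u x, v y - v x⟫ / ‖γ y - γ x‖ ^ 2) * muW γ x y

/-- The bilinear form `B³_γ`. -/
def B3 {n : ℕ} (s : ℝ) (γ u v : ℝ → En n) : ℝ :=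
  ∫ x in I01, ∫ y in I01,
    ‖Rop s γ γ x y‖ ^ 2 * (⟪Dg γ u x, Dg γ v x⟫ + ⟪Dg γ u y, Dg γ v y⟫) * muW γ x y

/-- The Riemannian metric `G_γ(u,v)`. -/
def Gmet {n : ℕ} (s : ℝ) (γ u v : ℝ → En n) : ℝ :=
  2 * B1 s γ u v + (2 * s + 1) * B2 s γ u v + B3 s γ u v + innerH1g γ u v + innerL2g γ u v

/-- The distortion `distor(γ) = sup_{x ≠ y} d_γ(x,y)/|γ(y) − γ(x)|`, valued in `[0,∞]`. -/
def distorE {n : ℕ} (γ : ℝ → En n) : ℝ≥0∞ :=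
  ⨆ (x ∈ I01) (y ∈ I01) (_ : x ≠ y), ENNReal.ofReal (arcDist γ x y / ‖γ y - γ x‖)

/-- The distortion, real-valued. -/
def distor {n : ℕ} (γ : ℝ → En n) : ℝ := (distorE γ).toReal

/-- A `C¹` path `[0,1] → 𝓜 ⊂ H^s(𝕋,ℝⁿ)` (with respect to the `H^s` topology), recorded
together with its velocity field `V`. -/
structure C1Path (s : ℝ) (n : ℕ) where
  Γ : ℝ → ℝ → En n
  V : ℝ → ℝ → En n
  mem : ∀ t ∈ Set.Icc (0 : ℝ) 1, InM s (Γ t)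
  memV : ∀ t ∈ Set.Icc (0 : ℝ) 1, InHs s (V t)
  isDeriv : ∀ t ∈ Set.Icc (0 : ℝ) 1,
    Tendsto (fun h : ℝ => HsNorm s fun x => h⁻¹ • (Γ (t + h) x - Γ t x) - V t x)
      (𝓝[{h : ℝ | t + h ∈ Set.Icc (0 : ℝ) 1 ∧ h ≠ 0}] 0) (𝓝 0)
  contV : ∀ t ∈ Set.Icc (0 : ℝ) 1,
    Tendsto (fun τ : ℝ => HsNorm s fun x => V τ x - V t x) (𝓝[Set.Icc (0 : ℝ) 1] t) (𝓝 0)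

/-- Length of a path with respect to `G`. -/
def pathLen {s : ℝ} {n : ℕ} (P : C1Path s n) : ℝ :=
  ∫ t in (0 : ℝ)..1, Real.sqrt (Gmet s (P.Γ t) (P.V t) (P.V t))

/-- The path (Dirichlet) energy of a path with respect to `G`. -/
def pathEnergy {s : ℝ} {n : ℕ} (P : C1Path s n) : ℝ :=
  (1 / 2) * ∫ t in (0 : ℝ)..1, Gmet s (P.Γ t) (P.V t) (P.V t)

/-- The geodesic distance induced by `G`, valued in `[0,∞]` (`∞` if there is no path). -/
def geodDist (s : ℝ) {n : ℕ} (γ₀ γ₁ : ℝ → En n) : ℝ≥0∞ :=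
  ⨅ (P : C1Path s n) (_ : P.Γ 0 = γ₀ ∧ P.Γ 1 = γ₁), ENNReal.ofReal (pathLen P)

/-- `U ⊆ 𝓜` is bounded with respect to the geodesic distance `d_G`. -/
def GBounded (s : ℝ) {n : ℕ} (U : Set (ℝ → En n)) : Prop :=
  (∀ γ ∈ U, InM s γ) ∧
    ∃ γ₀, InM s γ₀ ∧ ∃ R : ℝ, ∀ γ ∈ U, geodDist s γ γ₀ ≤ ENNReal.ofReal R

/-- Weak convergence in the Hilbert space `H^s(𝕋,ℝⁿ)`. -/
def WeakHsTendsto {n : ℕ} (s : ℝ) (γk : ℕ → ℝ → En n) (γ : ℝ → En n) : Prop :=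
  ∀ v : ℝ → En n, InHs s v →
    Tendsto (fun k => HsInner s (γk k) v) atTop (𝓝 (HsInner s γ v))

/-- Directional derivative of `γ ↦ G_γ(u,v)` at `γ` in direction `w`. -/
def DGdir {n : ℕ} (s : ℝ) (γ w u v : ℝ → En n) : ℝ :=
  deriv (fun t : ℝ => Gmet s (fun x => γ x + t • w x) u v) 0

/-- `F'` is the derivative of the path `F` with respect to the `H^s` norm, on `S`. -/
def IsHsDerivOn {n : ℕ} (s : ℝ) (F F' : ℝ → ℝ → En n) (S : Set ℝ) : Prop :=
  ∀ t ∈ S,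
    Tendsto (fun h : ℝ => HsNorm s fun x => h⁻¹ • (F (t + h) x - F t x) - F' t x)
      (𝓝[{h : ℝ | t + h ∈ S ∧ h ≠ 0}] 0) (𝓝 0)

/-- The path `F` is continuous on `S` with respect to the `H^s` norm. -/
def HsContOn {n : ℕ} (s : ℝ) (F : ℝ → ℝ → En n) (S : Set ℝ) : Prop :=
  ∀ t ∈ S, Tendsto (fun τ : ℝ => HsNorm s fun x => F τ x - F t x) (𝓝[S] t) (𝓝 0)

/-- A solution of the geodesic initial value problem on `[0,∞)`, recorded as a triple
(position `Γ`, velocity `V`, acceleration `W`); the geodesic equation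
`Γ̈ + A_Γ(Γ̇)Γ̇ = 0` is expressed weakly via the Koszul formula for the
Christoffel operator `A`. -/
def GeodesicSol {n : ℕ} (s : ℝ) (γ₀ v₀ : ℝ → En n) (Γ V W : ℝ → ℝ → En n) : Prop :=
  (∀ t ∈ Set.Ici (0 : ℝ), InM s (Γ t) ∧ InHs s (V t) ∧ InHs s (W t)) ∧
  Γ 0 = γ₀ ∧ V 0 = v₀ ∧
  IsHsDerivOn s Γ V (Set.Ici 0) ∧ IsHsDerivOn s V W (Set.Ici 0) ∧
  HsContOn s V (Set.Ici 0) ∧ HsContOn s W (Set.Ici 0) ∧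
  ∀ t ∈ Set.Ici (0 : ℝ), ∀ w : ℝ → En n, InHs s w →
    Gmet s (Γ t) (W t) w + DGdir s (Γ t) (V t) (V t) w
      - (1 / 2) * DGdir s (Γ t) w (V t) (V t) = 0

lemma dT_eq (x y : ℝ) : dT x y = |y - x - round (y - x)| := by
  unfold dT
  apply le_antisymm
  · refine (ciInf_le ⟨0, ?_⟩ (-round (y - x))).trans (le_of_eq ?_)
    · rintro _ ⟨k, rfl⟩; exact abs_nonneg _
    · push_cast
      rw [← abs_neg]; congr 1; ring
  · refine le_ciInf fun k => ?_
    refine (round_le (y - x) (-k)).trans (le_of_eq ?_)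
    push_cast
    rw [← abs_neg]; congr 1; ring

lemma dT_nonneg (x y : ℝ) : 0 ≤ dT x y := by rw [dT_eq]; exact abs_nonneg _

lemma dT_le (x y : ℝ) : dT x y ≤ |y - x| := by
  rw [dT_eq]; simpa using round_le (y - x) 0

lemma dT_add_one (x y : ℝ) : dT x (y + 1) = dT x y := by
  rw [dT_eq, dT_eq]
  have : y + 1 - x = (y - x) + 1 := by ring
  rw [this, round_add_one]; push_cast; congr 1; ring

lemma dT_shift (x h : ℝ) (hh : h ∈ Ico (-(1/2) : ℝ) (1/2)) : dT x (x + h) = |h| := by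
  rw [dT_eq]
  have : x + h - x = h := by ring
  rw [this, round_eq_zero_iff.2 hh]; simp

lemma measurable_dT : Measurable (fun z : ℝ × ℝ => dT z.1 z.2) := by
  unfold dT
  exact Measurable.iInf fun k => by fun_prop

lemma lint_affine (a b : ℝ) (ha : a ≠ 0) (f : ℝ → ℝ≥0∞) :
    ∫⁻ t, f (b + a * t) = ENNReal.ofReal |a⁻¹| * ∫⁻ t, f t := by
  rw [← lintegral_add_left_eq_self f b]
  have h := (Homeomorph.mulLeft₀ a ha).toMeasurableEquiv.measurableEmbedding.lintegral_map
    (μ := volume) (fun t => f (b + t))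
  have e : ((Homeomorph.mulLeft₀ a ha).toMeasurableEquiv : ℝ → ℝ) = (a * ·) := rfl
  rw [e, Real.map_volume_mul_left ha, lintegral_smul_measure] at h
  simpa using h.symm

lemma lint_affine_sub (a b : ℝ) (ha : a ≠ 0) (f : ℝ → ℝ≥0∞) {S T : Set ℝ}
    (hS : MeasurableSet S) (hT : MeasurableSet T) (h : ∀ t ∈ T, b + a * t ∈ S) :
    ∫⁻ t in T, f (b + a * t) ≤ ENNReal.ofReal |a⁻¹| * ∫⁻ t in S, f t := by
  rw [← lintegral_indicator hS, ← lint_affine a b ha, ← lintegral_indicator hT]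
  refine lintegral_mono fun t => ?_
  by_cases ht : t ∈ T
  · simp [ht, h t ht]
  · simp [ht]

lemma lint_periodic (f : ℝ → ℝ≥0∞) (hf : Function.Periodic f 1) (x : ℝ) :
    ∫⁻ y in I01, f y = ∫⁻ h in Ico (-(1/2) : ℝ) (1/2), f (x + h) := by
  have h1 := (isAddFundamentalDomain_Ioc (zero_lt_one' ℝ) 0).setLIntegral_eq
    (isAddFundamentalDomain_Ioc (zero_lt_one' ℝ) (x - 1/2)) f hf.map_vadd_zmultiples
  unfold I01
  rw [restrict_Ico_eq_restrict_Ioc, restrict_Ico_eq_restrict_Ioc]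
  rw [zero_add] at h1
  rw [h1, ← lintegral_indicator measurableSet_Ioc, ← lintegral_indicator measurableSet_Ioc,
    ← lintegral_add_left_eq_self _ x]
  congr 1; ext t
  simp only [indicator, mem_Ioc]
  have : (x - 1/2 < x + t ∧ x + t ≤ x - 1/2 + 1) ↔ (-(1/2) < t ∧ t ≤ 1/2) := by
    constructor <;> rintro ⟨h1, h2⟩ <;> constructor <;> linarith
  simp only [this]

/-- inner Gagliardo integral -/
def gx {E : Type*} [NormedAddCommGroup E] (p : ℝ) (v : ℝ → E) (x : ℝ) : ℝ≥0∞ :=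
  ∫⁻ h in Ico (-(1/2) : ℝ) (1/2), ENNReal.ofReal (‖v (x + h) - v x‖ ^ 2 / |h| ^ p)

lemma gag_eq {E : Type*} [NormedAddCommGroup E] (σ : ℝ) (v : ℝ → E)
    (hv : Function.Periodic v 1) :
    gagliardoSqE σ v = ∫⁻ x in I01, gx (2 * σ + 1) v x := by
  unfold gagliardoSqE gx
  congr 1; ext x
  rw [lint_periodic _ _ x]
  · refine setLIntegral_congr_fun measurableSet_Ico fun h hh => ?_
    simp only [dT_shift x h hh]
  · intro y; simp only [dT_add_one, hv y]

lemma gag_meas {E : Type*} [NormedAddCommGroup E] (p : ℝ) (v : ℝ → E) (hv : Continuous v) :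
    Measurable (fun z : ℝ × ℝ => ENNReal.ofReal (‖v z.2 - v z.1‖ ^ 2 / dT z.1 z.2 ^ p)) := by
  have h1 : Measurable (fun z : ℝ × ℝ => ‖v z.2 - v z.1‖ ^ 2) :=
    Continuous.measurable (by fun_prop)
  exact ENNReal.measurable_ofReal.comp (h1.div (measurable_dT.pow_const p))

lemma gx_meas {E : Type*} [NormedAddCommGroup E] (p : ℝ) (v : ℝ → E) (hv : Continuous v) :
    Measurable (gx p v) := by
  have h1 : Measurable (fun z : ℝ × ℝ => ‖v (z.1 + z.2) - v z.1‖ ^ 2) :=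
    Continuous.measurable (by fun_prop)
  have h2 : Measurable (fun z : ℝ × ℝ => |z.2| ^ p) :=
    Measurable.pow_const (Continuous.measurable (by fun_prop)) p
  have h3 := ENNReal.measurable_ofReal.comp (h1.div h2)
  exact Measurable.lintegral_prod_right' (f := fun z : ℝ × ℝ =>
    ENNReal.ofReal (‖v (z.1 + z.2) - v z.1‖ ^ 2 / |z.2| ^ p)) h3

lemma gag_comb {E : Type*} [NormedAddCommGroup E] [NormedSpace ℝ E] (σ : ℝ) (u v : ℝ → E)
    (hu : Continuous u) (a b : ℝ) :
    gagliardoSqE σ (fun x => a • u x + b • v x) ≤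
      ENNReal.ofReal (2 * a ^ 2) * gagliardoSqE σ u +
        ENNReal.ofReal (2 * b ^ 2) * gagliardoSqE σ v := by
  have hm := gag_meas (2 * σ + 1) u hu
  unfold gagliardoSqE
  rw [← lintegral_const_mul' _ _ ENNReal.ofReal_ne_top,
    ← lintegral_const_mul' _ _ ENNReal.ofReal_ne_top, ← lintegral_add_left]
  · refine lintegral_mono fun x => ?_
    simp only
    rw [← lintegral_const_mul' _ _ ENNReal.ofReal_ne_top,
      ← lintegral_const_mul' _ _ ENNReal.ofReal_ne_top, ← lintegral_add_left]
    · refine lintegral_mono fun y => ?_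
      simp only
      have hd : 0 ≤ dT x y ^ (2 * σ + 1) := Real.rpow_nonneg (dT_nonneg _ _) _
      rw [← ENNReal.ofReal_mul (by positivity), ← ENNReal.ofReal_mul (by positivity),
        ← ENNReal.ofReal_add (by positivity) (by positivity)]
      apply ENNReal.ofReal_le_ofReal
      rw [← mul_div_assoc, ← mul_div_assoc, ← add_div]
      gcongr
      have e : a • u y + b • v y - (a • u x + b • v x) = a • (u y - u x) + b • (v y - v x) := by
        simp only [smul_sub]; abel
      rw [e]
      have h1 := norm_add_le (a • (u y - u x)) (b • (v y - v x))
      rw [norm_smul, norm_smul] at h1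
      have h2 : ‖a • (u y - u x) + b • (v y - v x)‖ ^ 2 ≤
          (‖a‖ * ‖u y - u x‖ + ‖b‖ * ‖v y - v x‖) ^ 2 := by gcongr
      have ha : ‖a‖ ^ 2 = a ^ 2 := by simp
      have hb : ‖b‖ ^ 2 = b ^ 2 := by simp
      rw [← ha, ← hb]
      nlinarith [sq_nonneg (‖a‖ * ‖u y - u x‖ - ‖b‖ * ‖v y - v x‖)]
    · exact (hm.comp (measurable_prodMk_left (x := x))).const_mul _
  · exact Measurable.const_mul (Measurable.lintegral_prod_right hm) _

/-- Jensen / Cauchy–Schwarz on the unit interval. -/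
lemma jensen_sq {E : Type*} [NormedAddCommGroup E] [NormedSpace ℝ E] [CompleteSpace E]
    (f : ℝ → E) (hf : Continuous f) :
    ‖∫ t in (0:ℝ)..1, f t‖ ^ 2 ≤ ∫ t in (0:ℝ)..1, ‖f t‖ ^ 2 := by
  set m := ∫ t in (0:ℝ)..1, ‖f t‖ with hm
  have h1 : ‖∫ t in (0:ℝ)..1, f t‖ ≤ m := intervalIntegral.norm_integral_le_integral_norm zero_le_one
  have hi : ∀ g : ℝ → ℝ, Continuous g → IntervalIntegrable g volume 0 1 :=
    fun g hg => hg.intervalIntegrable _ _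
  have h2 : 0 ≤ ∫ t in (0:ℝ)..1, (‖f t‖ - m) ^ 2 :=
    intervalIntegral.integral_nonneg zero_le_one fun t _ => sq_nonneg _
  have h3 : ∫ t in (0:ℝ)..1, (‖f t‖ - m) ^ 2 = (∫ t in (0:ℝ)..1, ‖f t‖ ^ 2) - m ^ 2 := by
    have : (fun t => (‖f t‖ - m) ^ 2) = fun t => (‖f t‖ ^ 2 - (2 * m) * ‖f t‖) + m ^ 2 := by
      ext t; ring
    rw [this, intervalIntegral.integral_add (hi _ (by fun_prop)) (hi _ (by fun_prop)),
      intervalIntegral.integral_sub (hi _ (by fun_prop)) (hi _ (by fun_prop)),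
      intervalIntegral.integral_const_mul, ← hm]
    simp; ring
  have h4 : ‖∫ t in (0:ℝ)..1, f t‖ ^ 2 ≤ m ^ 2 := by gcongr
  linarith

lemma ofReal_int01 (f : ℝ → ℝ) (hf : Continuous f) (h0 : ∀ t, 0 ≤ f t) :
    ENNReal.ofReal (∫ t in (0:ℝ)..1, f t) = ∫⁻ t in Ioc (0:ℝ) 1, ENNReal.ofReal (f t) := by
  rw [intervalIntegral.integral_of_le zero_le_one]
  exact ofReal_integral_eq_lintegral_ofReal
    ((hf.intervalIntegrable 0 1).1) (ae_of_all _ h0)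

lemma hardy {E : Type*} [NormedAddCommGroup E] (p : ℝ) (hp : 1 ≤ p)
    (v : ℝ → E) (hv : Continuous v) (x : ℝ) :
    ∫⁻ h in Ico (-(1/2) : ℝ) (1/2),
      ENNReal.ofReal ((∫ t in (0:ℝ)..1, ‖v (x + t * h) - v x‖ ^ 2) / |h| ^ p) ≤ gx p v x := by
  have h1 : ∀ h : ℝ, ENNReal.ofReal ((∫ t in (0:ℝ)..1, ‖v (x + t * h) - v x‖ ^ 2) / |h| ^ p) =
      ∫⁻ t in Ioc (0:ℝ) 1, ENNReal.ofReal (‖v (x + t * h) - v x‖ ^ 2 / |h| ^ p) := by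
    intro h
    rw [← intervalIntegral.integral_div, ofReal_int01]
    · fun_prop
    · intro t; positivity
  simp_rw [h1]
  rw [lintegral_lintegral_swap]
  · have h2 : ∀ t ∈ Ioc (0:ℝ) 1, ∫⁻ h in Ico (-(1/2) : ℝ) (1/2),
        ENNReal.ofReal (‖v (x + t * h) - v x‖ ^ 2 / |h| ^ p) ≤ gx p v x := by
      intro t ht
      have e : ∀ h : ℝ, ENNReal.ofReal (‖v (x + t * h) - v x‖ ^ 2 / |h| ^ p) =
          ENNReal.ofReal (t ^ p) *
            (fun τ => ENNReal.ofReal (‖v (x + τ) - v x‖ ^ 2 / |τ| ^ p)) (0 + t * h) := by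
        intro h
        have htp : 0 < t ^ p := Real.rpow_pos_of_pos ht.1 p
        simp only [zero_add]
        rw [← ENNReal.ofReal_mul htp.le, abs_mul, abs_of_pos ht.1,
          Real.mul_rpow ht.1.le (abs_nonneg _)]
        congr 1
        field_simp
      simp_rw [e]
      rw [lintegral_const_mul' _ _ ENNReal.ofReal_ne_top]
      refine (mul_le_mul_right (lint_affine_sub t 0 ht.1.ne'
        (fun τ => ENNReal.ofReal (‖v (x + τ) - v x‖ ^ 2 / |τ| ^ p)) (S := Ico (-(1/2) : ℝ) (1/2))
        (T := Ico (-(1/2) : ℝ) (1/2)) measurableSet_Ico measurableSet_Ico ?_) _).trans ?_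
      · rintro h ⟨h1, h2⟩
        have := ht.1; have := ht.2
        constructor <;> nlinarith
      · rw [← mul_assoc, ← ENNReal.ofReal_mul (Real.rpow_nonneg ht.1.le _)]
        refine mul_le_of_le_one_left' (a := gx p v x) ?_
        rw [← ENNReal.ofReal_one]
        apply ENNReal.ofReal_le_ofReal
        rw [abs_of_pos (inv_pos.2 ht.1), ← div_eq_mul_inv, div_le_one ht.1]
        calc t ^ p ≤ t ^ (1:ℝ) := Real.rpow_le_rpow_of_exponent_ge ht.1 ht.2 hp
          _ = t := Real.rpow_one t
    refine (setLIntegral_mono' measurableSet_Ioc h2).trans ?_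
    simp
  · apply Measurable.aemeasurable
    have m1 : Measurable (fun z : ℝ × ℝ => ‖v (x + z.2 * z.1) - v x‖ ^ 2) :=
      Continuous.measurable (by fun_prop)
    have m2 : Measurable (fun z : ℝ × ℝ => |z.1| ^ p) :=
      Measurable.pow_const (Continuous.measurable (by fun_prop)) p
    exact ENNReal.measurable_ofReal.comp (m1.div m2)

lemma jensen_lint {E : Type*} [NormedAddCommGroup E] [NormedSpace ℝ E] [CompleteSpace E]
    (f : ℝ → E) (hf : Continuous f) (c : E) :
    ENNReal.ofReal (‖(∫ t in (0:ℝ)..1, f t) - c‖ ^ 2) ≤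
      ∫⁻ t in Ioc (0:ℝ) 1, ENNReal.ofReal (‖f t - c‖ ^ 2) := by
  have h := jensen_sq (fun t => f t - c) (by fun_prop)
  rw [intervalIntegral.integral_sub (hf.intervalIntegrable _ _) (by simp)] at h
  rw [← ofReal_int01 (fun t => ‖f t - c‖ ^ 2) (by fun_prop) (fun t => by positivity)]
  apply ENNReal.ofReal_le_ofReal
  simpa using h

lemma dT_zero {x y : ℝ} (hx : x ∈ I01) (hy : y ∈ I01) (h : dT x y = 0) : y = x := by
  rw [dT_eq, abs_eq_zero, sub_eq_zero] at h
  obtain ⟨hx1, hx2⟩ := hx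
  obtain ⟨hy1, hy2⟩ := hy
  have h1 : ((round (y - x) : ℤ) : ℝ) < 1 := by rw [← h]; linarith
  have h2 : (-1 : ℝ) < ((round (y - x) : ℤ) : ℝ) := by rw [← h]; linarith
  have h3 : round (y - x) < 1 := by exact_mod_cast h1
  have h4 : -1 < round (y - x) := by exact_mod_cast h2
  have h5 : round (y - x) = 0 := by omega
  rw [h5] at h; simp at h; linarith

lemma sob_step {E : Type*} [NormedAddCommGroup E] [NormedSpace ℝ E] [CompleteSpace E]
    (σ : ℝ) (hσ : 1 / 2 < σ) (v : ℝ → E) (hv : Continuous v) (hg : gagliardoSqE σ v < ⊤)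
    (x₀ b : ℝ) (hb : b ≠ 0) (hx : ∀ t ∈ Ioc (0:ℝ) 1, x₀ + b * t ∈ I01) :
    ‖(∫ t in (0:ℝ)..1, v (x₀ + b * t)) - ∫ t in (0:ℝ)..1, v (x₀ + (b / 2) * t)‖ ^ 2 ≤
      2 * |b| ^ (2 * σ - 1) * (gagliardoSqE σ v).toReal := by
  set p := 2 * σ + 1 with hp
  have hb' : 0 < |b| := abs_pos.2 hb
  have hx' : ∀ t ∈ Ioc (0:ℝ) 1, x₀ + b / 2 * t ∈ I01 := by
    intro t ht
    have := hx (t / 2) ⟨by linarith [ht.1], by linarith [ht.1, ht.2]⟩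
    convert this using 2; ring
  have hbp : 0 ≤ |b| ^ p := Real.rpow_nonneg hb'.le _
  let F : ℝ → ℝ → ℝ≥0∞ := fun x y => ENNReal.ofReal (‖v y - v x‖ ^ 2 / dT x y ^ p)
  have key : ENNReal.ofReal (‖(∫ t in (0:ℝ)..1, v (x₀ + b * t)) -
      ∫ t in (0:ℝ)..1, v (x₀ + (b / 2) * t)‖ ^ 2) ≤
      ENNReal.ofReal (2 * |b| ^ (2 * σ - 1)) * gagliardoSqE σ v := by
    rw [norm_sub_rev]
    calc _ ≤ ∫⁻ τ in Ioc (0:ℝ) 1, ENNReal.ofReal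
          (‖v (x₀ + (b / 2) * τ) - ∫ t in (0:ℝ)..1, v (x₀ + b * t)‖ ^ 2) :=
          jensen_lint _ (by fun_prop) _
      _ ≤ ∫⁻ τ in Ioc (0:ℝ) 1, ENNReal.ofReal (|b| ^ p) * ENNReal.ofReal |b⁻¹| *
            (fun X => ∫⁻ y in I01, F X y) (x₀ + (b / 2) * τ) := by
          refine setLIntegral_mono' measurableSet_Ioc fun τ hτ => ?_
          rw [norm_sub_rev]
          refine (jensen_lint _ (by fun_prop) _).trans ?_
          rw [mul_assoc]
          refine le_trans ?_ (mul_le_mul_right (lint_affine_sub b x₀ hb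
            (F (x₀ + b / 2 * τ)) (S := I01) (T := Ioc 0 1) measurableSet_Ico
            measurableSet_Ioc hx) _)
          rw [← lintegral_const_mul' _ _ ENNReal.ofReal_ne_top]
          refine setLIntegral_mono' measurableSet_Ioc fun t ht => ?_
          simp only [F]
          rw [← ENNReal.ofReal_mul hbp]
          apply ENNReal.ofReal_le_ofReal
          rcases (dT_nonneg (x₀ + b / 2 * τ) (x₀ + b * t)).eq_or_lt with h0 | h0
          · have := dT_zero (hx' τ hτ) (hx t ht) h0.symm
            rw [this]; simp
          · have hd : dT (x₀ + b / 2 * τ) (x₀ + b * t) ≤ |b| := by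
              refine (dT_le _ _).trans ?_
              have : x₀ + b * t - (x₀ + b / 2 * τ) = b * (t - τ / 2) := by ring
              rw [this, abs_mul]
              have h1 : |t - τ / 2| ≤ 1 := by
                rw [abs_le]; constructor <;> linarith [ht.1, ht.2, hτ.1, hτ.2]
              nlinarith
            have hdp : 0 < dT (x₀ + b / 2 * τ) (x₀ + b * t) ^ p := Real.rpow_pos_of_pos h0 _
            have hle : dT (x₀ + b / 2 * τ) (x₀ + b * t) ^ p ≤ |b| ^ p :=
              Real.rpow_le_rpow h0.le hd (by linarith)
            rw [← mul_div_assoc, le_div_iff₀ hdp, mul_comm]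
            gcongr
      _ ≤ ENNReal.ofReal (|b| ^ p) * ENNReal.ofReal |b⁻¹| *
            (ENNReal.ofReal |(b/2)⁻¹| * gagliardoSqE σ v) := by
          rw [lintegral_const_mul' _ _ (ENNReal.mul_ne_top ENNReal.ofReal_ne_top
            ENNReal.ofReal_ne_top)]
          refine mul_le_mul_right ?_ _
          exact lint_affine_sub (b/2) x₀ (by simpa using hb) (fun X => ∫⁻ y in I01, F X y)
            (S := I01) (T := Ioc 0 1) measurableSet_Ico measurableSet_Ioc hx'
      _ = _ := by
          rw [← mul_assoc]
          congr 1
          rw [← ENNReal.ofReal_mul hbp, ← ENNReal.ofReal_mul (by positivity)]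
          congr 1
          have : p = (2 * σ - 1) + 2 := by rw [hp]; ring
          rw [this, Real.rpow_add hb', abs_inv, abs_inv, abs_div]
          simp
          field_simp
          rw [sq_abs]
  have h2 := ENNReal.toReal_mono (ENNReal.mul_ne_top ENNReal.ofReal_ne_top hg.ne) key
  rwa [ENNReal.toReal_ofReal (by positivity), ENNReal.toReal_mul,
    ENNReal.toReal_ofReal (by positivity)] at h2

lemma sobolev (σ : ℝ) (hσ : 1 / 2 < σ) : ∃ C : ℝ, 0 < C ∧ ∀ (n : ℕ) (v : ℝ → En n),
    Continuous v → Function.Periodic v 1 → gagliardoSqE σ v < ⊤ → ∀ x,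
      ‖v x‖ ^ 2 ≤ C * ((∫ x in I01, ‖v x‖ ^ 2) + (gagliardoSqE σ v).toReal) := by
  set ρ : ℝ := (1/2 : ℝ) ^ ((2 * σ - 1) / 2) with hρ
  have hρ0 : 0 < ρ := Real.rpow_pos_of_pos (by norm_num) _
  have hρ1 : ρ < 1 := Real.rpow_lt_one (by norm_num) (by norm_num) (by linarith)
  refine ⟨4 + 4 / (1 - ρ) ^ 2, by have : 0 < 1 - ρ := by linarith
                                  positivity, ?_⟩
  intro n v hv hper hg x
  set D := (gagliardoSqE σ v).toReal with hD
  have hD0 : 0 ≤ D := ENNReal.toReal_nonneg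
  have hL0 : 0 ≤ ∫ x in I01, ‖v x‖ ^ 2 := integral_nonneg fun x => by positivity
  have main : ∀ x₀ a : ℝ, |a| = 1 / 2 → (∀ t ∈ Ioc (0:ℝ) 1, x₀ + a * t ∈ I01) →
      ‖v x₀‖ ^ 2 ≤ (4 + 4 / (1 - ρ) ^ 2) * ((∫ x in I01, ‖v x‖ ^ 2) + D) := by
    intro x₀ a ha hx
    have ha0 : a ≠ 0 := by intro h; rw [h] at ha; norm_num at ha
    let A : ℕ → En n := fun k => ∫ t in (0:ℝ)..1, v (x₀ + (a * (1/2)^k) * t)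
    have hstep : ∀ k, dist (A k) (A (k+1)) ≤ √(2 * D) * ρ ^ k := by
      intro k
      have h2k : (0:ℝ) < (1/2)^k := by positivity
      have h2k1 : ((1:ℝ)/2)^k ≤ 1 := pow_le_one₀ (by norm_num) (by norm_num)
      have h := sob_step σ hσ v hv hg x₀ (a * (1/2)^k) (mul_ne_zero ha0 h2k.ne') (by
        intro t ht
        have := hx ((1/2)^k * t) ⟨mul_pos h2k ht.1, by nlinarith [ht.1, ht.2]⟩
        rwa [← mul_assoc] at this)
      have e : a * (1/2)^k / 2 = a * (1/2)^(k+1) := by rw [pow_succ]; ring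
      rw [e] at h
      have e2 : |a * (1/2)^k| ^ (2 * σ - 1) = (ρ ^ (k+1)) ^ 2 := by
        rw [abs_mul, ha, abs_of_pos h2k, ← pow_succ', hρ, ← Real.rpow_natCast, ← Real.rpow_natCast,
          ← Real.rpow_natCast, ← Real.rpow_mul (by positivity), ← Real.rpow_mul (by positivity),
          ← Real.rpow_mul (by positivity)]
        congr 1; push_cast; ring
      rw [e2] at h
      rw [dist_eq_norm]
      apply le_of_sq_le_sq _ (by positivity)
      refine h.trans ?_
      rw [mul_pow, Real.sq_sqrt (by positivity)]
      have : (ρ ^ (k+1)) ^ 2 ≤ (ρ ^ k) ^ 2 := by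
        gcongr 1
        exact pow_le_pow_of_le_one hρ0.le hρ1.le (Nat.le_succ k)
      nlinarith
    have hlim : Tendsto A atTop (𝓝 (v x₀)) := by
      have hc : Continuous (fun b : ℝ => ∫ t in (0:ℝ)..1, v (x₀ + b * t)) :=
        intervalIntegral.continuous_parametric_intervalIntegral_of_continuous' (by fun_prop) _ _
      have h1 : Tendsto (fun k : ℕ => a * (1/2:ℝ)^k) atTop (𝓝 0) := by
        simpa using (tendsto_pow_atTop_nhds_zero_of_lt_one (r := (1/2:ℝ)) (by norm_num)
          (by norm_num)).const_mul a
      have h2 := (hc.tendsto 0).comp h1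
      simpa [A, Function.comp_def] using h2
    have hd := dist_le_of_le_geometric_of_tendsto₀ ρ _ hρ1 hstep hlim
    have hA0 : ‖A 0‖ ^ 2 ≤ 2 * ∫ x in I01, ‖v x‖ ^ 2 := by
      have hint : IntegrableOn (fun x => ‖v x‖ ^ 2) I01 := by
        have : Continuous (fun x => ‖v x‖ ^ 2) := by fun_prop
        exact (this.integrableOn_Icc (a := 0) (b := 1)).mono_set Ico_subset_Icc_self
      have h1 := jensen_lint (fun t => v (x₀ + (a * (1/2)^0) * t)) (by fun_prop) 0
      simp only [pow_zero, mul_one, sub_zero] at h1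
      have h2 := h1.trans (lint_affine_sub a x₀ ha0 (fun y => ENNReal.ofReal (‖v y‖ ^ 2))
        (S := I01) measurableSet_Ico measurableSet_Ioc hx)
      rw [← ofReal_integral_eq_lintegral_ofReal hint (ae_of_all _ fun x => by positivity),
        ← ENNReal.ofReal_mul (abs_nonneg _), ENNReal.ofReal_le_ofReal_iff (by positivity),
        abs_inv, ha] at h2
      simpa [A] using h2
    rw [dist_eq_norm] at hd
    have h3 : ‖v x₀‖ ≤ ‖A 0‖ + √(2 * D) / (1 - ρ) := by
      have := norm_sub_norm_le (v x₀) (A 0)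
      rw [norm_sub_rev] at this; linarith
    have h4 : ‖v x₀‖ ^ 2 ≤ (‖A 0‖ + √(2 * D) / (1 - ρ)) ^ 2 := by gcongr
    have h5 : (√(2 * D) / (1 - ρ)) ^ 2 = 2 * D / (1 - ρ) ^ 2 := by
      rw [div_pow, Real.sq_sqrt (by positivity)]
    have h6 : 0 ≤ (∫ x in I01, ‖v x‖ ^ 2) / (1 - ρ) ^ 2 := by positivity
    have h7 : (4 + 4 / (1 - ρ) ^ 2) * ((∫ x in I01, ‖v x‖ ^ 2) + D) =
      4 * (∫ x in I01, ‖v x‖ ^ 2) + 4 * D + 4 * ((∫ x in I01, ‖v x‖ ^ 2) / (1 - ρ) ^ 2) +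
        2 * (2 * D / (1 - ρ) ^ 2) := by ring
    nlinarith [sq_nonneg (‖A 0‖ - √(2 * D) / (1 - ρ))]
  have hfr : v x = v (Int.fract x) := by
    have := hper.sub_int_mul_eq (x := x) ⌊x⌋
    rw [mul_one] at this
    rw [Int.fract, this]
  rw [hfr]
  have f0 := Int.fract_nonneg x
  have f1 := Int.fract_lt_one x
  rcases lt_or_ge (Int.fract x) (1/2) with h | h
  · refine main _ (1/2) (by norm_num) fun t ht => ⟨by linarith [ht.1], by linarith [ht.2]⟩
  · refine main _ (-(1/2)) (by norm_num) fun t ht => ⟨by linarith [ht.2], by linarith [ht.1]⟩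

lemma per_deriv {n : ℕ} {u : ℝ → En n} (hu : Function.Periodic u 1) :
    Function.Periodic (deriv u) 1 := by
  intro x
  have : (fun y => u (y + 1)) = u := funext hu
  rw [← deriv_comp_add_const, this]

lemma per_int {n : ℕ} {u : ℝ → En n} (hu : Function.Periodic u 1) (x : ℝ) (k : ℤ) :
    u (x - k) = u x := by
  have := hu.sub_int_mul_eq (x := x) k
  rwa [mul_one] at this

lemma cont_deriv {n : ℕ} {u : ℝ → En n} (hu : ContDiff ℝ 1 u) : Continuous (deriv u) :=
  hu.continuous_deriv le_rfl

lemma ftc {n : ℕ} {u : ℝ → En n} (hu : ContDiff ℝ 1 u) (x h : ℝ) :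
    u (x + h) - u x = h • ∫ t in (0:ℝ)..1, deriv u (x + t * h) := by
  have hc := cont_deriv hu
  have := intervalIntegral.integral_unitInterval_deriv_eq_sub (𝕜 := ℝ) (f := u) (f' := deriv u) (z₀ := x) (z₁ := h)
    (by simp only [smul_eq_mul]; fun_prop)
    (fun t _ => ((hu.differentiable (by norm_num)) _).hasDerivAt)
  simpa using this.symm

lemma ftc2 {n : ℕ} {u : ℝ → En n} (hu : ContDiff ℝ 1 u) (x h : ℝ) :
    u (x + h) - u x =
      h • (deriv u x + ∫ t in (0:ℝ)..1, (deriv u (x + t * h) - deriv u x)) := by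
  have hc := cont_deriv hu
  rw [ftc hu, intervalIntegral.integral_sub (Continuous.intervalIntegrable (by fun_prop) _ _)
    (by simp)]
  simp

structure Good {n : ℕ} (c M : ℝ) (η : ℝ → En n) : Prop where
  per : Function.Periodic η 1
  cd : ContDiff ℝ 1 η
  lip : ∀ x h : ℝ, |h| ≤ 1/2 → c * |h| ≤ ‖η (x + h) - η x‖
  low : ∀ x, c ≤ ‖deriv η x‖
  up : ∀ x, ‖deriv η x‖ ≤ M

lemma bdd_of_per {n : ℕ} {v : ℝ → En n} (hv : Continuous v) (hp : Function.Periodic v 1) :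
    ∃ M, 0 < M ∧ ∀ x, ‖v x‖ ≤ M := by
  obtain ⟨M, hM⟩ := (isCompact_Icc (a := (0:ℝ)) (b := 1)).exists_bound_of_continuousOn hv.continuousOn
  refine ⟨max M 1, by positivity, fun x => ?_⟩
  rw [← per_int hp x ⌊x⌋]
  exact (hM _ ⟨Int.fract_nonneg x, (Int.fract_lt_one x).le⟩).trans (le_max_left _ _)

lemma good_of_inM {s : ℝ} {n : ℕ} {γ : ℝ → En n} (hγ : InM s γ) :
    ∃ c M : ℝ, 0 < c ∧ 0 < M ∧ Good c M γ := by
  obtain ⟨⟨hper, hcd, -⟩, hinj, hne⟩ := hγ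
  obtain ⟨M, hM0, hM⟩ := bdd_of_per (cont_deriv hcd) (per_deriv hper)
  have hc := cont_deriv hcd
  let g : ℝ × ℝ → En n := fun z => ∫ t in (0:ℝ)..1, deriv γ (z.1 + t * z.2)
  have hg : Continuous g :=
    intervalIntegral.continuous_parametric_intervalIntegral_of_continuous' (by fun_prop) _ _
  have hgne : ∀ z ∈ Icc (0:ℝ) 1 ×ˢ Icc (0:ℝ) (1/2), g z ≠ 0 := by
    rintro ⟨x, h⟩ ⟨hx, hh⟩ h0
    simp only at hx hh
    rcases hh.1.eq_or_lt with e | hpos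
    · subst e; simp [g] at h0; exact hne x h0
    · have e : γ (x + h) = γ x := by
        rw [← sub_eq_zero, ftc hcd]
        have : (∫ t in (0:ℝ)..1, deriv γ (x + t * h)) = 0 := h0
        rw [this, smul_zero]
      have e1 : ∀ y : ℝ, 0 ≤ y → y < 1 → γ (y + h) ≠ γ y := by
        intro y hy0 hy1 e
        rcases lt_or_ge (y + h) 1 with h1 | h1
        · have := hinj ⟨by linarith, h1⟩ ⟨hy0, hy1⟩ e
          linarith
        · have e2 : γ (y + h - 1) = γ (y + h) := by
            have := per_int hper (y + h) 1; simpa using this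
          have := hinj (x₁ := y + h - 1) (x₂ := y) ⟨by linarith, by linarith [hh.2]⟩ ⟨hy0, hy1⟩
            (e2.trans e)
          linarith [hh.2]
      rcases hx.2.eq_or_lt with e2 | e2
      · subst e2
        apply e1 0 le_rfl one_pos
        rw [add_comm 1 h, hper] at e
        have h01 := hper 0
        rw [zero_add] at h01 ⊢
        rw [e, h01]
      · exact e1 x hx.1 e2 e
  obtain ⟨c, hc0, hcle⟩ : ∃ c > 0, ∀ z ∈ Icc (0:ℝ) 1 ×ˢ Icc (0:ℝ) (1/2), c ≤ ‖g z‖ := by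
    obtain ⟨z, hz, hmin⟩ := (isCompact_Icc.prod isCompact_Icc).exists_isMinOn
      (s := Icc (0:ℝ) 1 ×ˢ Icc (0:ℝ) (1/2)) ⟨(0,0), by simp⟩ hg.norm.continuousOn
    exact ⟨‖g z‖, norm_pos_iff.2 (hgne z hz), fun y hy => hmin hy⟩
  have L : ∀ x h : ℝ, 0 ≤ h → h ≤ 1/2 → c * h ≤ ‖γ (x + h) - γ x‖ := by
    intro x h h0 h1
    rw [← per_int hper x ⌊x⌋, ← per_int hper (x+h) ⌊x⌋]
    have e : x + h - ⌊x⌋ = Int.fract x + h := by rw [Int.fract]; ring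
    have e' : x - ⌊x⌋ = Int.fract x := rfl
    rw [e, e', ftc hcd, norm_smul, Real.norm_of_nonneg h0, mul_comm]
    exact mul_le_mul_of_nonneg_left (hcle (Int.fract x, h)
      ⟨⟨Int.fract_nonneg x, (Int.fract_lt_one x).le⟩, h0, h1⟩) h0
  refine ⟨c, M, hc0, hM0, hper, hcd, ?_, ?_, hM⟩
  · intro x h hh
    rcases le_total 0 h with h0 | h0
    · rw [abs_of_nonneg h0] at hh ⊢; exact L x h h0 hh
    · rw [abs_of_nonpos h0] at hh ⊢
      have := L (x + h) (-h) (by linarith) hh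
      rwa [add_neg_cancel_right, norm_sub_rev] at this
  · intro x
    rw [← per_int (per_deriv hper) x ⌊x⌋]
    have := hcle (Int.fract x, 0) ⟨⟨Int.fract_nonneg x, (Int.fract_lt_one x).le⟩, by simp⟩
    simpa [g] using this

lemma lip_of_bound {n : ℕ} {u : ℝ → En n} (hu : ContDiff ℝ 1 u) {W : ℝ}
    (hW : ∀ x, ‖deriv u x‖ ≤ W) (x h : ℝ) : ‖u (x + h) - u x‖ ≤ W * |h| := by
  have := Convex.norm_image_sub_le_of_norm_deriv_le (f := u) (s := univ) (x := x) (y := x + h)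
    (fun x _ => (hu.differentiable (by norm_num)) x) (fun x _ => hW x) convex_univ trivial trivial
  simpa using this

lemma Good.perturb {n : ℕ} {c M : ℝ} {γ η : ℝ → En n} (hγ : Good c M γ)
    (hp : Function.Periodic η 1) (hcd : ContDiff ℝ 1 η)
    (h : ∀ x, ‖deriv η x - deriv γ x‖ ≤ c / 2) : Good (c / 2) (M + c / 2) η := by
  refine ⟨hp, hcd, ?_, ?_, ?_⟩
  · intro x k hk
    have h1 := lip_of_bound (u := fun x => η x - γ x) (hcd.sub hγ.cd) (W := c / 2) (by
      intro x
      rw [deriv_fun_sub (hcd.differentiable (by norm_num) x)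
        (hγ.cd.differentiable (by norm_num) x)]
      exact h x) x k
    have h2 := hγ.lip x k hk
    have h3 := norm_sub_norm_le (γ (x + k) - γ x) (η (x + k) - η x)
    have e : γ (x + k) - γ x - (η (x + k) - η x) = -(η (x + k) - γ (x + k) - (η x - γ x)) := by abel
    rw [e, norm_neg] at h3
    linarith
  · intro x
    have h3 := norm_sub_norm_le (deriv γ x) (deriv η x)
    rw [norm_sub_rev] at h3
    linarith [hγ.low x, h x]
  · intro x
    have h3 := norm_sub_norm_le (deriv η x) (deriv γ x)
    linarith [hγ.up x, h x]

lemma Good.shift {n : ℕ} {c M : ℝ} {η : ℝ → En n} (hη : Good c M η) (x y : ℝ) :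
    c * dT x y ≤ ‖η y - η x‖ := by
  rw [dT_eq]
  have := hη.lip x (y - x - round (y - x)) (abs_sub_round _)
  have e : x + (y - x - round (y - x)) = y - (round (y - x) : ℤ) := by ring
  rwa [e, per_int hη.per] at this

lemma Good.inM {n : ℕ} {c M s : ℝ} (hc : 0 < c) {η : ℝ → En n} (hη : Good c M η)
    (h : InHs s η) : InM s η := by
  refine ⟨h, ?_, fun x h0 => ?_⟩
  · intro x hx y hy e
    have := hη.shift x y
    rw [e, sub_self, norm_zero] at this
    have h0 : dT x y = 0 := le_antisymm (by nlinarith) (dT_nonneg _ _)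
    exact (dT_zero hx hy h0).symm
  · have := hη.low x
    rw [h0, norm_zero] at this; linarith

/-- mean squared oscillation of the derivative -/
def Pm {n : ℕ} (u : ℝ → En n) (x h : ℝ) : ℝ :=
  ∫ t in (0:ℝ)..1, ‖deriv u (x + t * h) - deriv u x‖ ^ 2

lemma Pm_nonneg {n : ℕ} (u : ℝ → En n) (x h : ℝ) : 0 ≤ Pm u x h :=
  intervalIntegral.integral_nonneg zero_le_one fun t _ => by positivity

lemma num_bound {n : ℕ} {c M W : ℝ} (hc : 0 < c) {η w : ℝ → En n} (hη : Good c M η)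
    (hw : ContDiff ℝ 1 w) (hW : ∀ x, ‖deriv w x‖ ≤ W) (x h : ℝ) :
    ‖w (x + h) - w x - DDg η w x (η (x + h) - η x)‖ ^ 2 ≤
      2 * h ^ 2 * (Pm w x h + (W / c) ^ 2 * Pm η x h) := by
  have hW0 : 0 ≤ W := (norm_nonneg _).trans (hW x)
  have hcw := cont_deriv hw
  have hce := cont_deriv hη.cd
  have hIw := jensen_sq (fun t => deriv w (x + t * h) - deriv w x) (by fun_prop)
  have hIe := jensen_sq (fun t => deriv η (x + t * h) - deriv η x) (by fun_prop)
  rw [ftc2 hw, ftc2 hη.cd]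
  unfold Pm
  set Iw := ∫ t in (0:ℝ)..1, (deriv w (x + t * h) - deriv w x)
  set Ie := ∫ t in (0:ℝ)..1, (deriv η (x + t * h) - deriv η x)
  have hlow := hη.low x
  set e := deriv η x
  have he : 0 < ‖e‖ := hc.trans_le hlow
  have hform : h • (deriv w x + Iw) - DDg η w x (h • (e + Ie)) =
      h • (Iw - ((‖e‖ ^ 2)⁻¹ * ⟪e, Ie⟫) • deriv w x) := by
    unfold DDg
    have : (‖e‖ ^ 2)⁻¹ * ⟪e, h • (e + Ie)⟫ = h + h * ((‖e‖ ^ 2)⁻¹ * ⟪e, Ie⟫) := by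
      rw [inner_smul_right, inner_add_right, real_inner_self_eq_norm_sq]
      field_simp
    change _ - ((‖e‖ ^ 2)⁻¹ * ⟪e, h • (e + Ie)⟫) • deriv w x = _
    rw [this, add_smul, smul_add, smul_sub, mul_smul]; abel
  rw [hform, norm_smul, mul_pow]
  have hb : ‖Iw - ((‖e‖ ^ 2)⁻¹ * ⟪e, Ie⟫) • deriv w x‖ ≤ ‖Iw‖ + (W / c) * ‖Ie‖ := by
    refine (norm_sub_le _ _).trans ?_
    gcongr
    rw [norm_smul, norm_mul, norm_inv, norm_pow, norm_norm]
    have h1 : ‖⟪e, Ie⟫‖ ≤ ‖e‖ * ‖Ie‖ := norm_inner_le_norm _ _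
    calc (‖e‖ ^ 2)⁻¹ * ‖⟪e, Ie⟫‖ * ‖deriv w x‖ ≤ (‖e‖ ^ 2)⁻¹ * (‖e‖ * ‖Ie‖) * W := by
          gcongr; exact hW x
      _ = W / ‖e‖ * ‖Ie‖ := by field_simp
      _ ≤ W / c * ‖Ie‖ := by gcongr
  have hb2 : ‖Iw - ((‖e‖ ^ 2)⁻¹ * ⟪e, Ie⟫) • deriv w x‖ ^ 2 ≤ (‖Iw‖ + (W / c) * ‖Ie‖) ^ 2 := by
    gcongr
  have hh : ‖h‖ ^ 2 = h ^ 2 := by simp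
  rw [hh, mul_comm 2, mul_assoc]
  gcongr
  have h5 : (W / c) ^ 2 * ‖Ie‖ ^ 2 ≤ (W / c) ^ 2 *
      ∫ t in (0:ℝ)..1, ‖deriv η (x + t * h) - e‖ ^ 2 := by gcongr
  nlinarith [sq_nonneg (‖Iw‖ - (W / c) * ‖Ie‖)]

lemma R_bound {n : ℕ} {s c M W : ℝ} (hs : 0 < s) (hc : 0 < c) {η w : ℝ → En n} (hη : Good c M η)
    (hw : ContDiff ℝ 1 w) (hW : ∀ x, ‖deriv w x‖ ≤ W) (x h : ℝ) (hh : |h| ≤ 1/2) :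
    ‖Rop s η w x (x + h)‖ ^ 2 * muW η x (x + h) ≤
      2 * M ^ 2 / c ^ (2 * s + 1) *
        (Pm w x h / |h| ^ (2 * (s - 1) + 1) +
          (W / c) ^ 2 * (Pm η x h / |h| ^ (2 * (s - 1) + 1))) := by
  have P1 := Pm_nonneg w x h
  have P2 := Pm_nonneg η x h
  have hcp : 0 < c ^ (2 * s + 1) := Real.rpow_pos_of_pos hc _
  have hhp : 0 ≤ |h| ^ (2 * (s - 1) + 1) := Real.rpow_nonneg (abs_nonneg _) _
  rcases eq_or_ne h 0 with rfl | h0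
  · have : ‖Rop s η w x (x + 0)‖ ^ 2 * muW η x (x + 0) = 0 := by
      simp [muW]
    rw [this]; positivity
  have ha : 0 < |h| := abs_pos.2 h0
  have hN := num_bound hc hη hw hW x h
  have hl := hη.lip x h hh
  unfold Rop muW
  set Δ := ‖η (x + h) - η x‖
  set N := ‖w (x + h) - w x - DDg η w x (η (x + h) - η x)‖ with hNdef
  have hch : 0 < c * |h| := by positivity
  have hΔ : 0 < Δ := hch.trans_le hl
  rw [norm_smul, ← hNdef]
  have hΔs : 0 < Δ ^ s := Real.rpow_pos_of_pos hΔ _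
  have e1 : Δ ^ (2 * s + 1) = (Δ ^ s) ^ 2 * Δ := by
    rw [Real.rpow_add hΔ, Real.rpow_one, mul_comm 2 s, Real.rpow_mul hΔ.le]; norm_cast
  have e2 : (c * |h|) ^ (2 * s + 1) = c ^ (2 * s + 1) * (|h| ^ (2 * (s - 1) + 1) * h ^ 2) := by
    rw [Real.mul_rpow hc.le ha.le]
    have : 2 * s + 1 = (2 * (s - 1) + 1) + 2 := by ring
    rw [this, Real.rpow_add ha]; simp
  have e3 : (c * |h|) ^ (2 * s + 1) ≤ Δ ^ (2 * s + 1) :=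
    Real.rpow_le_rpow hch.le hl (by linarith)
  have hmm : ‖deriv η x‖ * ‖deriv η (x + h)‖ ≤ M ^ 2 := by
    rw [sq]
    have := hη.up x; have := hη.up (x + h)
    have : 0 ≤ M := (norm_nonneg _).trans (hη.up x)
    gcongr
  calc (‖(Δ ^ s)⁻¹‖ * N) ^ 2 * (‖deriv η x‖ * ‖deriv η (x + h)‖ / Δ)
      = N ^ 2 * (‖deriv η x‖ * ‖deriv η (x + h)‖) / Δ ^ (2 * s + 1) := by
        rw [e1, norm_inv, Real.norm_of_nonneg hΔs.le]; field_simp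
    _ ≤ (2 * h ^ 2 * (Pm w x h + (W / c) ^ 2 * Pm η x h)) * M ^ 2 / (c * |h|) ^ (2 * s + 1) := by
        gcongr
    _ = _ := by
        rw [e2]
        have : 0 < |h| ^ (2 * (s - 1) + 1) := Real.rpow_pos_of_pos ha _
        field_simp

lemma Pm_meas {n : ℕ} {u : ℝ → En n} (hu : ContDiff ℝ 1 u) (p x : ℝ) :
    Measurable (fun h : ℝ => ENNReal.ofReal (Pm u x h / |h| ^ p)) := by
  have hc := cont_deriv hu
  have h1 : Continuous (fun h : ℝ => Pm u x h) :=
    intervalIntegral.continuous_parametric_intervalIntegral_of_continuous' (by fun_prop) _ _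
  have h2 : Measurable (fun h : ℝ => |h| ^ p) :=
    Measurable.pow_const (Continuous.measurable (by fun_prop)) p
  exact ENNReal.measurable_ofReal.comp (h1.measurable.div h2)

lemma R_int {n : ℕ} {s c M W : ℝ} (hs : 1 < s) (hc : 0 < c) {η w : ℝ → En n} (hη : Good c M η)
    (hwp : Function.Periodic w 1) (hw : ContDiff ℝ 1 w) (hW : ∀ x, ‖deriv w x‖ ≤ W) :
    ∫⁻ x in I01, ∫⁻ y in I01, ENNReal.ofReal (‖Rop s η w x y‖ ^ 2 * muW η x y) ≤
      ENNReal.ofReal (2 * M ^ 2 / c ^ (2 * s + 1)) * (gagliardoSqE (s - 1) (deriv w) +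
        ENNReal.ofReal ((W / c) ^ 2) * gagliardoSqE (s - 1) (deriv η)) := by
  set p := 2 * (s - 1) + 1 with hp
  set K := 2 * M ^ 2 / c ^ (2 * s + 1) with hK
  have hK0 : 0 ≤ K := by
    have : 0 < c ^ (2 * s + 1) := Real.rpow_pos_of_pos hc _
    positivity
  rw [gag_eq _ _ (per_deriv hwp), gag_eq _ _ (per_deriv hη.per),
    ← lintegral_const_mul' _ _ ENNReal.ofReal_ne_top,
    ← lintegral_add_left (gx_meas _ _ (cont_deriv hw)),
    ← lintegral_const_mul' _ _ ENNReal.ofReal_ne_top]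
  refine lintegral_mono fun x => ?_
  simp only
  rw [lint_periodic _ _ x]
  · refine le_trans ?_ (mul_le_mul_right (add_le_add (hardy p (by linarith) _ (cont_deriv hw) x)
      (mul_le_mul_right (hardy p (by linarith) _ (cont_deriv hη.cd) x) _)) _)
    rw [← lintegral_const_mul' _ _ ENNReal.ofReal_ne_top,
      ← lintegral_add_left (show Measurable (fun h : ℝ => ENNReal.ofReal
        ((∫ t in (0:ℝ)..1, ‖deriv w (x + t * h) - deriv w x‖ ^ 2) / |h| ^ p)) from Pm_meas hw p x),
      ← lintegral_const_mul' _ _ ENNReal.ofReal_ne_top]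
    refine setLIntegral_mono' measurableSet_Ico fun h hh => ?_
    have P1 := Pm_nonneg w x h
    have P2 := Pm_nonneg η x h
    have hhp : 0 ≤ |h| ^ p := Real.rpow_nonneg (abs_nonneg _) _
    change _ ≤ ENNReal.ofReal K * (ENNReal.ofReal (Pm w x h / |h| ^ p) +
      ENNReal.ofReal ((W / c) ^ 2) * ENNReal.ofReal (Pm η x h / |h| ^ p))
    rw [← ENNReal.ofReal_mul (by positivity), ← ENNReal.ofReal_add (by positivity) (by positivity),
      ← ENNReal.ofReal_mul hK0]
    apply ENNReal.ofReal_le_ofReal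
    exact R_bound (by linarith) hc hη hw hW x h (abs_le.2 ⟨hh.1, hh.2.le⟩)
  · intro y
    simp only [Rop, muW, DDg, hη.per y, hwp y, per_deriv hη.per y]

lemma dbl_bound (f φ : ℝ → ℝ → ℝ) (k T : ℝ) (hk : 0 ≤ k) (hT : 0 ≤ T)
    (h : ∀ x y, |f x y| ≤ k * φ x y)
    (hφ : ∫⁻ x in I01, ∫⁻ y in I01, ENNReal.ofReal (φ x y) ≤ ENNReal.ofReal T) :
    ∫ x in I01, ∫ y in I01, f x y ≤ k * T := by
  have h1 : ‖∫ x in I01, ∫ y in I01, f x y‖ₑ ≤ ENNReal.ofReal (k * T) := by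
    calc _ ≤ ∫⁻ x in I01, ‖∫ y in I01, f x y‖ₑ := enorm_integral_le_lintegral_enorm _
      _ ≤ ∫⁻ x in I01, ∫⁻ y in I01, ‖f x y‖ₑ :=
        lintegral_mono fun x => enorm_integral_le_lintegral_enorm _
      _ ≤ ∫⁻ x in I01, ∫⁻ y in I01, ENNReal.ofReal k * ENNReal.ofReal (φ x y) := by
        refine lintegral_mono fun x => lintegral_mono fun y => ?_
        simp only
        rw [Real.enorm_eq_ofReal_abs, ← ENNReal.ofReal_mul hk]
        exact ENNReal.ofReal_le_ofReal (h x y)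
      _ = ENNReal.ofReal k * ∫⁻ x in I01, ∫⁻ y in I01, ENNReal.ofReal (φ x y) := by
        rw [← lintegral_const_mul' _ _ ENNReal.ofReal_ne_top]
        congr 1; ext x
        rw [← lintegral_const_mul' _ _ ENNReal.ofReal_ne_top]
      _ ≤ _ := by rw [ENNReal.ofReal_mul hk]; gcongr
  rw [Real.enorm_eq_ofReal_abs, ENNReal.ofReal_le_ofReal_iff (by positivity)] at h1
  exact (le_abs_self _).trans h1

lemma vol_I01 : volume I01 = 1 := by simp [I01]

lemma sgl_bound (f : ℝ → ℝ) (C : ℝ) (h : ∀ x, |f x| ≤ C) : ∫ x in I01, f x ≤ C := by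
  have := norm_setIntegral_le_of_norm_le_const (μ := volume) (s := I01) (f := f) (C := C)
    (by simp [vol_I01]) (fun x _ => h x)
  simp [Measure.real, vol_I01] at this
  exact (le_abs_self _).trans this

lemma G_bound {n : ℕ} {s c M W K A : ℝ} (hs : 1 < s) (hc : 0 < c) {η w : ℝ → En n}
    (hη : Good c M η) (hK0 : 0 ≤ K) (hA0 : 0 ≤ A)
    (hK : gagliardoSqE (s - 1) (deriv η) ≤ ENNReal.ofReal K)
    (hwp : Function.Periodic w 1) (hw : ContDiff ℝ 1 w) (hW : ∀ x, ‖deriv w x‖ ≤ W)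
    (hA : gagliardoSqE (s - 1) (deriv w) ≤ ENNReal.ofReal A) :
    Gmet s η w w ≤ 2 * (2 * M ^ 2 / c ^ (2 * s + 1) * (A + (W / c) ^ 2 * K)) +
      (2 * s + 1) * ((W / c) ^ 2 * (2 * M ^ 2 / c ^ (2 * s + 1) * (K + (M / c) ^ 2 * K))) +
      2 * (W / c) ^ 2 * (2 * M ^ 2 / c ^ (2 * s + 1) * (K + (M / c) ^ 2 * K)) +
      (W / c) ^ 2 * M + M * ∫ x in I01, ‖w x‖ ^ 2 := by
  have hW0 : 0 ≤ W := (norm_nonneg _).trans (hW 0)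
  have hM0 : 0 ≤ M := (norm_nonneg _).trans (hη.up 0)
  have hcp : 0 < c ^ (2 * s + 1) := Real.rpow_pos_of_pos hc _
  set K0 := 2 * M ^ 2 / c ^ (2 * s + 1) with hK0d
  have hK00 : 0 ≤ K0 := by positivity
  set T := K0 * (K + (M / c) ^ 2 * K) with hTd
  have hT0 : 0 ≤ T := by positivity
  have hRw : ∫⁻ x in I01, ∫⁻ y in I01, ENNReal.ofReal (‖Rop s η w x y‖ ^ 2 * muW η x y) ≤
      ENNReal.ofReal (K0 * (A + (W / c) ^ 2 * K)) := by
    refine (R_int hs hc hη hwp hw hW).trans ?_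
    rw [ENNReal.ofReal_mul hK00, ENNReal.ofReal_add hA0 (by positivity),
      ENNReal.ofReal_mul (by positivity)]
    gcongr
  have hRe : ∫⁻ x in I01, ∫⁻ y in I01, ENNReal.ofReal (‖Rop s η η x y‖ ^ 2 * muW η x y) ≤
      ENNReal.ofReal T := by
    refine (R_int hs hc hη hη.per hη.cd hη.up).trans ?_
    rw [hTd, ENNReal.ofReal_mul hK00, ENNReal.ofReal_add hK0 (by positivity),
      ENNReal.ofReal_mul (by positivity)]
    gcongr
  have hmu : ∀ x y, 0 ≤ muW η x y := fun x y => by unfold muW; positivity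
  have hDg : ∀ x, ⟪Dg η w x, Dg η w x⟫ ≤ (W / c) ^ 2 := by
    intro x
    rw [real_inner_self_eq_norm_sq, Dg, norm_smul, norm_inv, norm_norm]
    have h1 := hη.low x
    have h2 := hW x
    have : ‖deriv η x‖⁻¹ * ‖deriv w x‖ ≤ W / c := by
      rw [div_eq_inv_mul]; gcongr
    gcongr
  have hDg0 : ∀ x, 0 ≤ ⟪Dg η w x, Dg η w x⟫ := fun x => real_inner_self_nonneg
  have b1 : B1 s η w w ≤ 1 * (K0 * (A + (W / c) ^ 2 * K)) := by
    refine dbl_bound _ _ 1 _ zero_le_one (by positivity) (fun x y => ?_) hRw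
    rw [real_inner_self_eq_norm_sq, one_mul, abs_of_nonneg (mul_nonneg (by positivity) (hmu x y))]
  have b2 : B2 s η w w ≤ (W / c) ^ 2 * T := by
    refine dbl_bound _ _ _ _ (by positivity) hT0 (fun x y => ?_) hRe
    have hm := hmu x y
    rw [real_inner_self_eq_norm_sq, abs_of_nonneg (by positivity)]
    have h1 : ‖w y - w x‖ ^ 2 / ‖η y - η x‖ ^ 2 ≤ (W / c) ^ 2 := by
      rw [← div_pow]
      refine pow_le_pow_left₀ (by positivity) ?_ 2
      have h2 := hη.shift x y
      have h3 : ‖w y - w x‖ ≤ W * dT x y := by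
        rw [dT_eq]
        have := lip_of_bound hw hW x (y - x - round (y - x))
        have e : x + (y - x - round (y - x)) = y - (round (y - x) : ℤ) := by ring
        rwa [e, per_int hwp] at this
      apply div_le_of_le_mul₀ (norm_nonneg _) (by positivity)
      calc _ ≤ W * dT x y := h3
        _ = W / c * (c * dT x y) := by field_simp
        _ ≤ _ := by gcongr
    calc _ ≤ ‖Rop s η η x y‖ ^ 2 * (W / c) ^ 2 * muW η x y := by gcongr
      _ = _ := by ring
  have b3 : B3 s η w w ≤ 2 * (W / c) ^ 2 * T := by
    refine dbl_bound _ _ _ _ (by positivity) hT0 (fun x y => ?_) hRe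
    have hm := hmu x y
    have := hDg0 x; have := hDg0 y
    rw [abs_of_nonneg (by positivity)]
    calc _ ≤ ‖Rop s η η x y‖ ^ 2 * (2 * (W / c) ^ 2) * muW η x y := by
          gcongr; linarith [hDg x, hDg y]
      _ = _ := by ring
  have b4 : innerH1g η w w ≤ (W / c) ^ 2 * M := by
    refine sgl_bound _ _ fun x => ?_
    have := hDg0 x
    rw [abs_of_nonneg (by positivity)]
    have := hDg x; have := hη.up x
    gcongr
  have b5 : innerL2g η w w ≤ M * ∫ x in I01, ‖w x‖ ^ 2 := by
    unfold innerL2g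
    have hcw := hw.continuous
    have hce := cont_deriv hη.cd
    have hi : ∀ g : ℝ → ℝ, Continuous g → IntegrableOn g I01 := fun g hg =>
      (hg.integrableOn_Icc (a := 0) (b := 1)).mono_set Ico_subset_Icc_self
    rw [← integral_const_mul]
    refine integral_mono (hi _ (by fun_prop)) (hi _ (by fun_prop)) fun x => ?_
    simp only
    rw [real_inner_self_eq_norm_sq, mul_comm]
    have := hη.up x
    gcongr
  unfold Gmet
  have := mul_le_mul_of_nonneg_left b2 (show 0 ≤ 2 * s + 1 by linarith)
  linarith

lemma deriv_comb {n : ℕ} {u v : ℝ → En n} (hu : ContDiff ℝ 1 u) (hv : ContDiff ℝ 1 v) (a b : ℝ) :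
    deriv (fun x => a • u x + b • v x) = fun x => a • deriv u x + b • deriv v x := by
  ext1 x
  have h1 := ((hu.differentiable (by norm_num)) x).hasDerivAt
  have h2 := ((hv.differentiable (by norm_num)) x).hasDerivAt
  exact ((h1.const_smul a).add (h2.const_smul b)).deriv

lemma InHs.comb {n : ℕ} {s : ℝ} {u v : ℝ → En n} (hu : InHs s u) (hv : InHs s v) (a b : ℝ) :
    InHs s (fun x => a • u x + b • v x) := by
  refine ⟨fun x => by simp only [hu.1 x, hv.1 x],
    (hu.2.1.const_smul a).add (hv.2.1.const_smul b), ?_⟩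
  rw [deriv_comb hu.2.1 hv.2.1]
  refine (gag_comb _ _ _ (cont_deriv hu.2.1) a b).trans_lt ?_
  exact ENNReal.add_lt_top.2 ⟨ENNReal.mul_lt_top ENNReal.ofReal_lt_top hu.2.2,
    ENNReal.mul_lt_top ENNReal.ofReal_lt_top hv.2.2⟩

lemma InHs.sub {n : ℕ} {s : ℝ} {u v : ℝ → En n} (hu : InHs s u) (hv : InHs s v) :
    InHs s (fun x => u x - v x) := by
  have := hu.comb hv 1 (-1)
  simpa [sub_eq_add_neg] using this

lemma deriv_sub_fn {n : ℕ} {u v : ℝ → En n} (hu : ContDiff ℝ 1 u) (hv : ContDiff ℝ 1 v) :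
    deriv (fun x => u x - v x) = fun x => deriv u x - deriv v x := by
  have := deriv_comb hu hv 1 (-1)
  simpa [sub_eq_add_neg] using this

lemma HsNorm_parts {n : ℕ} {s : ℝ} (u : ℝ → En n) :
    (∫ x in I01, ‖u x‖ ^ 2) ≤ HsNorm s u ^ 2 ∧
    (∫ x in I01, ‖deriv u x‖ ^ 2) + (gagliardoSqE (s - 1) (deriv u)).toReal ≤ HsNorm s u ^ 2 ∧
    (gagliardoSqE (s - 1) (deriv u)).toReal ≤ HsNorm s u ^ 2 := by
  have h1 : 0 ≤ ∫ x in I01, ‖u x‖ ^ 2 := integral_nonneg fun x => by positivity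
  have h2 : 0 ≤ ∫ x in I01, ‖deriv u x‖ ^ 2 := integral_nonneg fun x => by positivity
  have h3 : 0 ≤ (gagliardoSqE (s - 1) (deriv u)).toReal := ENNReal.toReal_nonneg
  have : HsNorm s u ^ 2 = HsNormSq s u := Real.sq_sqrt (by unfold HsNormSq; positivity)
  rw [this]; unfold HsNormSq
  refine ⟨?_, ?_, ?_⟩ <;> linarith

lemma HsNorm_zero {n : ℕ} {s : ℝ} : HsNorm s (fun _ => (0 : En n)) = 0 := by
  simp [HsNorm, HsNormSq, gagliardoSqE]

lemma HsNorm_symm {n : ℕ} {s : ℝ} (u v : ℝ → En n) :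
    HsNorm s (fun x => u x - v x) = HsNorm s (fun x => v x - u x) := by
  have e : (fun x => u x - v x) = fun x => -(v x - u x) := by ext1 x; abel
  have ed : deriv (fun x => -(v x - u x)) = fun x => - deriv (fun x => v x - u x) x := by
    ext1 x; exact deriv.fun_neg
  unfold HsNorm HsNormSq gagliardoSqE
  rw [e, ed]
  simp only [norm_neg, ← neg_sub']

lemma norm_bound_main (s : ℝ) (hs : s ∈ Set.Ioo (3 / 2 : ℝ) 2) : ∃ C : ℝ, 0 < C ∧
    ∀ (n : ℕ) (u : ℝ → En n), InHs s u → ∀ x, ‖deriv u x‖ ≤ C * HsNorm s u := by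
  obtain ⟨C, hC, h⟩ := sobolev (s - 1) (by linarith [hs.1])
  refine ⟨√C, Real.sqrt_pos.2 hC, fun n u hu x => ?_⟩
  have h0 : 0 ≤ HsNorm s u := Real.sqrt_nonneg _
  apply le_of_sq_le_sq _ (by positivity)
  rw [mul_pow, Real.sq_sqrt hC.le]
  refine (h n _ (cont_deriv hu.2.1) (per_deriv hu.1) hu.2.2 x).trans ?_
  gcongr
  exact (HsNorm_parts u).2.1

lemma ball_good {n : ℕ} {s c Cs : ℝ} (hCs : 0 < Cs) {γ η : ℝ → En n}
    (hC : ∀ (u : ℝ → En n), InHs s u → ∀ x, ‖deriv u x‖ ≤ Cs * HsNorm s u)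
    (hγ : InHs s γ) (hη : InHs s η) (h : HsNorm s (fun x => η x - γ x) < c / (2 * Cs)) (x : ℝ) :
    ‖deriv η x - deriv γ x‖ ≤ c / 2 := by
  have h1 := hC _ (hη.sub hγ) x
  rw [deriv_sub_fn hη.2.1 hγ.2.1] at h1
  refine h1.trans ?_
  calc _ ≤ Cs * (c / (2 * Cs)) := by gcongr
    _ = c / 2 := by field_simp

lemma gag_le_of_ball {n : ℕ} {s r : ℝ} {γ η : ℝ → En n}
    (hγ : InHs s γ) (hη : InHs s η) (h : HsNorm s (fun x => η x - γ x) < r) :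
    gagliardoSqE (s - 1) (deriv η) ≤
      ENNReal.ofReal (2 * (gagliardoSqE (s - 1) (deriv γ)).toReal + 2 * r ^ 2) := by
  have hd := hη.sub hγ
  have e : deriv η = fun x => (1 : ℝ) • deriv γ x + (1 : ℝ) • deriv (fun x => η x - γ x) x := by
    rw [deriv_sub_fn hη.2.1 hγ.2.1]; ext1 x; simp
  have h0 : 0 ≤ HsNorm s (fun x => η x - γ x) := Real.sqrt_nonneg _
  have h1 := gag_comb (s - 1) (deriv γ) (deriv (fun x => η x - γ x)) (cont_deriv hγ.2.1) 1 1
  rw [← e, show (2 * (1 : ℝ) ^ 2) = 2 by norm_num] at h1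
  refine h1.trans ?_
  have h2 : (gagliardoSqE (s - 1) (deriv (fun x => η x - γ x))).toReal ≤ r ^ 2 :=
    (HsNorm_parts _).2.2.trans (by gcongr)
  rw [ENNReal.ofReal_add (by positivity) (by positivity)]
  refine add_le_add ?_ ?_
  · rw [ENNReal.ofReal_mul (by norm_num), ENNReal.ofReal_toReal hγ.2.2.ne]
  · rw [ENNReal.ofReal_mul (by norm_num)]
    gcongr
    exact (ENNReal.le_ofReal_iff_toReal_le hd.2.2.ne (by positivity)).2 h2

lemma main_aux (s : ℝ) (hs : s ∈ Set.Ioo (3 / 2 : ℝ) 2) (n : ℕ)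
    (γ : ℝ → En n) (hγ : InM s γ) :
    ∃ r C : ℝ, 0 < r ∧ 0 < C ∧
      (∀ η : ℝ → En n, InHs s η → HsNorm s (fun x => η x - γ x) < r → InM s η) ∧
      ∀ γ₀ γ₁ : ℝ → En n, InHs s γ₀ → InHs s γ₁ →
        HsNorm s (fun x => γ₀ x - γ x) < r → HsNorm s (fun x => γ₁ x - γ x) < r →
        geodDist s γ₁ γ₀ ≤ ENNReal.ofReal (C * HsNorm s (fun x => γ₁ x - γ₀ x)) := by
  obtain ⟨Cs, hCs, hC'⟩ := norm_bound_main s hs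
  have hC := hC' n
  obtain ⟨c, M, hc, hM, hg⟩ := good_of_inM hγ
  have hs1 : 1 < s := by linarith [hs.1]
  set r := c / (2 * Cs) with hr
  have hr0 : 0 < r := by positivity
  set A0 := (gagliardoSqE (s - 1) (deriv γ)).toReal with hA0
  have hA00 : 0 ≤ A0 := ENNReal.toReal_nonneg
  set c' := c / 2 with hc'
  set M' := M + c / 2 with hM'
  have hc'0 : 0 < c' := by positivity
  have hM'0 : 0 < M' := by positivity
  set K1 := 2 * A0 + 2 * r ^ 2 with hK1
  have hK10 : 0 ≤ K1 := by positivity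
  set K := 4 * K1 with hK
  have hK0' : 0 ≤ K := by positivity
  set K0 := 2 * M' ^ 2 / c' ^ (2 * s + 1) with hK0
  have hK00 : 0 ≤ K0 := by positivity
  set T := K0 * (K + (M' / c') ^ 2 * K) with hT
  have hT0 : 0 ≤ T := by positivity
  set Cf := 2 * (K0 * (1 + (Cs / c') ^ 2 * K)) + (2 * s + 1) * ((Cs / c') ^ 2 * T) +
    2 * (Cs / c') ^ 2 * T + (Cs / c') ^ 2 * M' + M' with hCf
  have hs0 : 0 < s := by linarith
  have hCf0 : 0 < Cf := by positivity
  refine ⟨r, √Cf, hr0, Real.sqrt_pos.2 hCf0, fun η hη h => ?_, fun γ₀ γ₁ h0 h1 b0 b1 => ?_⟩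
  · exact (hg.perturb hη.1 hη.2.1 (ball_good hCs hC hγ.1 hη h)).inM hc'0 hη
  set N := HsNorm s (fun x => γ₁ x - γ₀ x) with hN
  have hN0 : 0 ≤ N := Real.sqrt_nonneg _
  have hΓ : ∀ t ∈ Set.Icc (0 : ℝ) 1, InHs s (fun x => (1 - t) • γ₁ x + t • γ₀ x) :=
    fun t _ => h1.comb h0 _ _
  have hGood : ∀ t ∈ Set.Icc (0 : ℝ) 1, Good c' M' (fun x => (1 - t) • γ₁ x + t • γ₀ x) := by
    intro t ht
    refine hg.perturb (hΓ t ht).1 (hΓ t ht).2.1 fun x => ?_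
    rw [deriv_comb h1.2.1 h0.2.1]
    have e : (1 - t) • deriv γ₁ x + t • deriv γ₀ x - deriv γ x =
        (1 - t) • (deriv γ₁ x - deriv γ x) + t • (deriv γ₀ x - deriv γ x) := by
      module
    have q1 := ball_good hCs hC hγ.1 h1 b1 x
    have q0 := ball_good hCs hC hγ.1 h0 b0 x
    have t0 := ht.1
    have t1 : 0 ≤ 1 - t := by linarith [ht.2]
    simp only
    rw [e]
    refine (norm_add_le _ _).trans ?_
    rw [norm_smul, norm_smul, Real.norm_of_nonneg t0, Real.norm_of_nonneg t1]
    calc _ ≤ (1 - t) * (c / 2) + t * (c / 2) := by gcongr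
      _ = c / 2 := by ring
  have hgag : ∀ t ∈ Set.Icc (0 : ℝ) 1,
      gagliardoSqE (s - 1) (deriv (fun x => (1 - t) • γ₁ x + t • γ₀ x)) ≤ ENNReal.ofReal K := by
    intro t ht
    rw [deriv_comb h1.2.1 h0.2.1]
    refine (gag_comb _ _ _ (cont_deriv h1.2.1) _ _).trans ?_
    have q1 := gag_le_of_ball hγ.1 h1 b1
    have q0 := gag_le_of_ball hγ.1 h0 b0
    have t0 := ht.1
    have t1 := ht.2
    calc _ ≤ ENNReal.ofReal 2 * ENNReal.ofReal K1 + ENNReal.ofReal 2 * ENNReal.ofReal K1 := by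
          refine add_le_add (mul_le_mul' (ENNReal.ofReal_le_ofReal (by nlinarith)) q1)
            (mul_le_mul' (ENNReal.ofReal_le_ofReal (by nlinarith)) q0)
      _ = ENNReal.ofReal K := by
          rw [← ENNReal.ofReal_mul (by norm_num), ← ENNReal.ofReal_add (by positivity) (by positivity)]
          congr 1; rw [hK]; ring
  have hV : InHs s (fun x => γ₀ x - γ₁ x) := h0.sub h1
  have hVN : HsNorm s (fun x => γ₀ x - γ₁ x) = N := HsNorm_symm _ _
  have hG : ∀ t ∈ Set.Icc (0 : ℝ) 1,
      √(Gmet s (fun x => (1 - t) • γ₁ x + t • γ₀ x) (fun x => γ₀ x - γ₁ x)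
        (fun x => γ₀ x - γ₁ x)) ≤ √Cf * N := by
    intro t ht
    have p := HsNorm_parts (s := s) (fun x => γ₀ x - γ₁ x)
    rw [hVN] at p
    have hW : ∀ x, ‖deriv (fun x => γ₀ x - γ₁ x) x‖ ≤ Cs * N := fun x => by
      have := hC _ hV x
      rwa [hVN] at this
    have hA : gagliardoSqE (s - 1) (deriv (fun x => γ₀ x - γ₁ x)) ≤ ENNReal.ofReal (N ^ 2) :=
      (ENNReal.le_ofReal_iff_toReal_le hV.2.2.ne (by positivity)).2 p.2.2
    have q := G_bound hs1 hc'0 (hGood t ht) hK0' (by positivity) (hgag t ht) hV.1 hV.2.1 hW hA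
    have q2 : Gmet s (fun x => (1 - t) • γ₁ x + t • γ₀ x) (fun x => γ₀ x - γ₁ x)
        (fun x => γ₀ x - γ₁ x) ≤ Cf * N ^ 2 := by
      refine q.trans ?_
      have p1 := mul_le_mul_of_nonneg_left p.1 hM'0.le
      rw [← hK0, ← hT]
      have e : Cs * N / c' = Cs / c' * N := by ring
      rw [e]
      refine (add_le_add_right p1 _).trans (le_of_eq ?_)
      rw [hCf]; ring
    calc _ ≤ √(Cf * N ^ 2) := Real.sqrt_le_sqrt q2
      _ = √Cf * N := by rw [Real.sqrt_mul hCf0.le, Real.sqrt_sq hN0]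
  let P : C1Path s n :=
    { Γ := fun t x => (1 - t) • γ₁ x + t • γ₀ x
      V := fun _ x => γ₀ x - γ₁ x
      mem := fun t ht => (hGood t ht).inM hc'0 (hΓ t ht)
      memV := fun _ _ => hV
      isDeriv := fun t _ => by
        refine tendsto_const_nhds.congr' ?_
        filter_upwards [self_mem_nhdsWithin] with h hh
        rw [← HsNorm_zero (n := n) (s := s)]
        congr 1
        ext1 x
        have e : (1 - (t + h)) • γ₁ x + (t + h) • γ₀ x - ((1 - t) • γ₁ x + t • γ₀ x) =
          h • (γ₀ x - γ₁ x) := by module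
        rw [e, smul_smul, inv_mul_cancel₀ hh.2, one_smul, sub_self]
      contV := fun t _ => by
        simp only [sub_self]
        rw [HsNorm_zero]
        exact tendsto_const_nhds }
  have hP : P.Γ 0 = γ₁ ∧ P.Γ 1 = γ₀ := by
    constructor <;> (ext1 x; simp [P])
  refine (iInf₂_le P hP).trans (ENNReal.ofReal_le_ofReal ?_)
  have := intervalIntegral.norm_integral_le_of_norm_le_const (a := (0 : ℝ)) (b := 1)
    (f := fun t => √(Gmet s (P.Γ t) (P.V t) (P.V t))) (C := √Cf * N) (fun t ht => by
      rw [Set.uIoc_of_le zero_le_one] at ht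
      rw [Real.norm_of_nonneg (Real.sqrt_nonneg _)]
      exact hG t ⟨ht.1.le, ht.2⟩)
  rw [sub_zero, abs_one, mul_one] at this
  exact (le_abs_self _).trans this

/-- local upper bound for `d_G` by the `H^s` distance: for every
`γ ∈ 𝓜` there are `r > 0` and `C > 0` such that the `H^s`-ball `B_r(γ)` is contained in
`𝓜` and `d_G(γ₁,γ₀) ≤ C·‖γ₁ − γ₀‖_{H^s}` for all `γ₀, γ₁ ∈ B_r(γ)`; together with the
converse bound this makes the identity `(𝓜,d_G) → (𝓜,‖·‖_{H^s})` locally bi-Lipschitz. -/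
theorem statement14 (s : ℝ) (hs : s ∈ Set.Ioo (3 / 2 : ℝ) 2) (n : ℕ) (hn : 2 ≤ n)
    (γ : ℝ → En n) (hγ : InM s γ) :
    ∃ r C : ℝ, 0 < r ∧ 0 < C ∧
      (∀ η : ℝ → En n, InHs s η → HsNorm s (fun x => η x - γ x) < r → InM s η) ∧
      ∀ γ₀ γ₁ : ℝ → En n, InHs s γ₀ → InHs s γ₁ →
        HsNorm s (fun x => γ₀ x - γ x) < r → HsNorm s (fun x => γ₁ x - γ x) < r →
        geodDist s γ₁ γ₀ ≤ ENNReal.ofReal (C * HsNorm s (fun x => γ₁ x - γ₀ x)) := by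
  exact main_aux s hs n γ hγ
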